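/- Let r ≥ 2, λ ∈ ℂ, and let A, U, B, V, X be r×r complex matrices, where A is lower triangular with all diagonal entries equal to λ, V has the V-structure, X has the X-structure, and the inherent quadratic stability (IQS) conditions hold, i.e., rows 3 through r of B·A coincide with rows 3 through r of X·B, and rows 3 through r of B·U coincide with rows 3 through r of X·V − V·X. Then there exist polynomials P₁, P₀ ∈ ℂ[Y] of degree at most r with P₁(0) = 1 and P₀(0) = 0 such that for every ω ∈ ℂ with 1 − λω ≠ 0, one has (1−λω)^r · charpoly(M(ω)) = X^{r−2} · ( (1−λω)^r · X² − P₁(ω)·X + P₀(ω) ), where M(ω) = V + ω B (I − ωA)⁻¹ U. -/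

import Mathlib

open Matrix

/-!
The rows of the IQS conditions say that, below its first two rows, `(1 - ωX) M(ω)` agrees with
`V (1 - ωX)`. Hence, wherever `1 - ωX` is invertible, `M(ω)` is similar to a matrix that has the
same rows as `V` from the third on; these are strictly upper triangular, so `x ^ (r - 2)` divides
the characteristic polynomial of `M(ω)`.

By the Schur complement, `det (1 - ωA) * charpoly (M(ω))` is the determinant of a block matrix
with entries in `R[ω][x]`, `R` being the ring of coefficients. It has degree at most the size of
`A` in `ω`, since `ω` occurs only in the columns of `A`. Over the power series ring `R⟦ω⟧` both
`1 - ωA` and `1 - ωX` are invertible, so the divisibility by `x ^ (r - 2)` holds there, and it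
descends to `R[ω][x]` because `R[ω]` embeds into `R⟦ω⟧`.
-/

section

open Polynomial

section MatricesAndPolynomials

variable {R : Type*} [CommRing R]

theorem row_mul_congr {l m n : Type*} [Fintype m] {P P' : Matrix l m R} {i : l}
    (h : P.row i = P'.row i) (Q : Matrix m n R) : (P * Q).row i = (P' * Q).row i :=
  congrArg (· ᵥ* Q) h

theorem natDegree_det_le_sum {n : Type*} [Fintype n] [DecidableEq n] (M : Matrix n n R[X])
    (d : n → ℕ) (hd : ∀ i j, (M i j).natDegree ≤ d j) : M.det.natDegree ≤ ∑ j, d j := by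
  rw [Matrix.det_apply]
  refine natDegree_sum_le_of_forall_le _ _ fun σ _ ↦ (natDegree_smul_le _ _).trans ?_
  exact (natDegree_prod_le _ _).trans (Finset.sum_le_sum fun j _ ↦ hd (σ j) j)

theorem coeff_coeff_swap (p : R[X][X]) (i j : ℕ) :
    ((Bivariate.swap p).coeff i).coeff j = (p.coeff j).coeff i := by
  induction p using Polynomial.induction_on' with
  | add p q hp hq => simp only [map_add, coeff_add, hp, hq]
  | monomial n f =>
    induction f using Polynomial.induction_on' with
    | add f g hf hg => simp only [map_add, coeff_add, hf, hg]
    | monomial m a =>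
      rw [Bivariate.swap_monomial_monomial]
      simp only [coeff_monomial]
      split_ifs <;> simp_all [coeff_monomial]

theorem natDegree_coeff_le_natDegree_swap (p : R[X][X]) (k : ℕ) :
    (p.coeff k).natDegree ≤ (Bivariate.swap p).natDegree := by
  refine natDegree_le_iff_coeff_eq_zero.2 fun i hi ↦ ?_
  rw [← coeff_coeff_swap, coeff_eq_zero_of_natDegree_lt hi, coeff_zero]

theorem X_pow_dvd_charpoly_of_strictUpper_rows {r k : ℕ} {N : Matrix (Fin r) (Fin r) R}
    (hN : ∀ i j : Fin r, k ≤ (i : ℕ) → (j : ℕ) ≤ i → N i j = 0) :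
    (X : R[X]) ^ (r - k) ∣ N.charpoly := by
  have lower_left : ∀ i : Fin r, ¬(i : ℕ) < k → ∀ j : Fin r, (j : ℕ) < k →
      charmatrix N i j = 0 := fun i hi j hj ↦ by
    rw [charmatrix_apply_ne N i j (by rintro rfl; exact hi hj), hN i j (by omega) (by omega)]
    simp
  have lower_right : (toSquareBlockProp (charmatrix N) fun i ↦ ¬(i : ℕ) < k).IsUpperTriangular :=
    fun i j (hij : (j : Fin r) < i) ↦ by
      simp [toSquareBlockProp, charmatrix_apply_ne _ _ _ hij.ne',
        hN i j (not_lt.1 i.2) hij.le]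
  have diag (i : {i : Fin r // ¬(i : ℕ) < k}) :
      toSquareBlockProp (charmatrix N) (fun i ↦ ¬(i : ℕ) < k) i i = X := by
    simp [toSquareBlockProp, charmatrix_apply_eq, hN i i (not_lt.1 i.2) le_rfl]
  have card : r - k ≤ Fintype.card {i : Fin r // ¬(i : ℕ) < k} := by
    rw [Fintype.card_subtype_compl, Fintype.card_fin, Fintype.card_subtype, Fin.card_filter_val_lt]
    omega
  rw [Matrix.charpoly, twoBlockTriangular_det _ _ lower_left, det_of_isUpperTriangular lower_right]
  simp only [diag, Finset.prod_const, Finset.card_univ]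
  exact (pow_dvd_pow X card).mul_left _

theorem charpoly_eq_of_strictUpper_rows_one {n : ℕ}
    {V : Matrix (Fin (n + 1)) (Fin (n + 1)) R} (hV1 : V 0 0 = 1)
    (hV0 : ∀ i j : Fin (n + 1), 1 ≤ (i : ℕ) → (j : ℕ) ≤ i → V i j = 0) :
    V.charpoly = (X - 1) * X ^ n := by
  have upper : V.IsUpperTriangular := fun i j (hij : j < i) ↦ hV0 i j (by omega) hij.le
  have diag_succ (i : Fin n) : V i.succ i.succ = 0 := hV0 _ _ (by simp) le_rfl
  rw [charpoly_of_isUpperTriangular _ upper, Fin.prod_univ_succ]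
  simp [hV1, diag_succ]

theorem det_one_sub_smul_of_isLowerTriangular {n : Type*} [Fintype n] [DecidableEq n]
    [LinearOrder n] {A : Matrix n n R} {a : R} (ω : R) (hlow : A.IsLowerTriangular)
    (hdiag : ∀ i, A i i = a) : (1 - ω • A).det = (1 - a * ω) ^ Fintype.card n := by
  have low : (1 - ω • A).IsLowerTriangular :=
    blockTriangular_one.sub fun i j hij ↦ by simp [hlow hij]
  simp [det_of_isLowerTriangular _ low, hdiag, mul_comm]

theorem isUnit_det_one_sub_X_smul {n : Type*} [Fintype n] [DecidableEq n] (A : Matrix n n R) :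
    IsUnit (1 - (PowerSeries.X : PowerSeries R) • A.map PowerSeries.C).det := by
  have coe_charpolyRev : (A.charpolyRev : PowerSeries R) =
      (1 - (PowerSeries.X : PowerSeries R) • A.map PowerSeries.C).det := by
    rw [charpolyRev, ← coeToPowerSeries.ringHom_apply, RingHom.map_det]
    congr 1
    ext i j : 2
    simp [Matrix.one_apply, apply_ite, X_mul_C, PowerSeries.X_mul]
  rw [← coe_charpolyRev, PowerSeries.isUnit_iff_constantCoeff]
  simp [coeff_zero_eq_eval_zero]

theorem eq_X_pow_mul_quadratic {p : R[X]} {n : ℕ} (hp : p.Monic) (hdeg : p.natDegree = n + 2)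
    (hdvd : X ^ n ∣ p) : p = X ^ n * (X ^ 2 + C (p.coeff (n + 1)) * X + C (p.coeff n)) := by
  obtain ⟨q, rfl⟩ := hdvd
  nontriviality R
  have q_monic : q.Monic := (monic_X_pow n).of_mul_monic_left hp
  have q_natDegree : q.natDegree = 2 := by
    rw [(monic_X_pow n).natDegree_mul q_monic, natDegree_X_pow] at hdeg
    omega
  have q_coeff_two : q.coeff 2 = 1 := q_natDegree ▸ q_monic.coeff_natDegree
  have q_eq := eq_quadratic_of_degree_le_two (natDegree_le_iff_degree_le.1 q_natDegree.le)
  rw [q_coeff_two, C_1, one_mul] at q_eq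
  rw [add_comm n 1, coeff_X_pow_mul, coeff_X_pow_mul', if_pos le_rfl, Nat.sub_self, ← q_eq]

end MatricesAndPolynomials

section Stability

variable {R S : Type*} [CommRing R] [CommRing S] {m n : Type*} [DecidableEq m]
  [Fintype n] [DecidableEq n]

variable (A : Matrix m m R) (U : Matrix m n R) (B : Matrix n m R) (V : Matrix n n R)

/-- The block matrix over `R[x]` in which the Schur complement of the block `1 - ωA` is the
characteristic matrix `x - M(ω)` of the stability matrix. -/
noncomputable def stabilityPencil (ω : R) : Matrix (m ⊕ n) (m ⊕ n) R[X] :=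
  fromBlocks ((1 - ω • A).map C) (U.map C) ((ω • B).map C) (charmatrix V)

theorem stabilityPencil_map (f : R →+* S) (ω : R) :
    (stabilityPencil A U B V ω).map (mapRingHom f) =
      stabilityPencil (A.map f) (U.map f) (B.map f) (V.map f) (f ω) := by
  simp only [stabilityPencil, fromBlocks_map, charmatrix_map]
  congr 1 <;> ext i j : 2 <;> simp [Matrix.one_apply, apply_ite]

variable [Fintype m]

/-- The stability matrix `M(ω)` of the general linear method with stage matrix `A` (indexed by the
stages `m`) and `U`, `B`, `V`, meaningful when `1 - ωA` is invertible. -/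
noncomputable def stabilityMatrix (ω : R) : Matrix n n R :=
  V + ω • (B * (1 - ω • A)⁻¹ * U)

/-- The numerator of the characteristic polynomial of the stability matrix: a polynomial in the
spectral variable (outer) and `ω` (inner) whose value at `ω` is `det (1 - ωA)` times the
characteristic polynomial of `M(ω)`. -/
noncomputable def stabilityPolynomial : R[X][X] :=
  (stabilityPencil (A.map C) (U.map C) (B.map C) (V.map C) X).det

theorem det_stabilityPencil {ω : R} (hA : IsUnit (1 - ω • A).det) :
    (stabilityPencil A U B V ω).det =
      C (1 - ω • A).det * (stabilityMatrix A U B V ω).charpoly := by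
  have hC : IsUnit ((1 - ω • A).map (C : R →+* R[X])).det := by
    rw [← RingHom.mapMatrix_apply, ← RingHom.map_det]
    exact hA.map C
  let := invertibleOfIsUnitDet _ hC
  have inv_map : ⅟((1 - ω • A).map (C : R →+* R[X])) = (1 - ω • A)⁻¹.map C := by
    refine invOf_eq_right_inv ?_
    rw [← Matrix.map_mul, mul_nonsing_inv _ hA]
    simp
  have schur : charmatrix V - (ω • B).map C * (1 - ω • A)⁻¹.map C * U.map C =
      charmatrix (stabilityMatrix A U B V ω) := by
    simp [stabilityMatrix, charmatrix, sub_sub, ← Matrix.map_mul, Matrix.map_add]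
  rw [stabilityPencil, det_fromBlocks₁₁, inv_map, schur, RingHom.map_det]
  rfl

theorem map_stabilityPolynomial (φ : R[X] →+* S) :
    (stabilityPolynomial A U B V).map φ = (stabilityPencil (A.map (φ.comp C)) (U.map (φ.comp C))
      (B.map (φ.comp C)) (V.map (φ.comp C)) (φ X)).det := by
  rw [stabilityPolynomial, ← coe_mapRingHom, RingHom.map_det, RingHom.mapMatrix_apply,
    stabilityPencil_map]
  rfl

theorem map_evalRingHom_stabilityPolynomial {ω : R} (hA : IsUnit (1 - ω • A).det) :
    (stabilityPolynomial A U B V).map (evalRingHom ω) =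
      C (1 - ω • A).det * (stabilityMatrix A U B V ω).charpoly := by
  have eval_comp_C : (evalRingHom ω).comp C = RingHom.id R := by ext; simp
  rw [map_stabilityPolynomial, eval_comp_C, ← det_stabilityPencil A U B V hA]
  simp

theorem eval_coeff_stabilityPolynomial {ω : R} (hA : IsUnit (1 - ω • A).det) (k : ℕ) :
    ((stabilityPolynomial A U B V).coeff k).eval ω =
      (1 - ω • A).det * (stabilityMatrix A U B V ω).charpoly.coeff k := by
  rw [← coeff_C_mul, ← map_evalRingHom_stabilityPolynomial A U B V hA, coeff_map,
    coe_evalRingHom]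

theorem eval_zero_coeff_stabilityPolynomial (k : ℕ) :
    ((stabilityPolynomial A U B V).coeff k).eval 0 = V.charpoly.coeff k := by
  simp [eval_coeff_stabilityPolynomial, stabilityMatrix]

theorem natDegree_coeff_stabilityPolynomial_le (k : ℕ) :
    ((stabilityPolynomial A U B V).coeff k).natDegree ≤ Fintype.card m := by
  refine (natDegree_coeff_le_natDegree_swap _ k).trans ?_
  have swap_det : Bivariate.swap (stabilityPolynomial A U B V) =
      ((stabilityPencil (A.map C) (U.map C) (B.map C) (V.map C) X).map Bivariate.swap).det :=
    AlgEquiv.map_det _ _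
  have natDegree_linear (a b : R) : (C (C a) - X * C (C b) : R[X][X]).natDegree ≤ 1 := by
    compute_degree
  rw [swap_det]
  refine (natDegree_det_le_sum _ (Sum.elim (fun _ ↦ 1) fun _ ↦ 0) ?_).trans (by simp)
  rintro (i | i) (j | j)
  · by_cases hij : i = j
    · simpa [stabilityPencil, Bivariate.swap_C, hij] using natDegree_linear 1 (A j j)
    · simpa [stabilityPencil, Bivariate.swap_C, hij] using natDegree_linear 0 (A i j)
  · simp [stabilityPencil, Bivariate.swap_C]
  · simpa [stabilityPencil, Bivariate.swap_C] using natDegree_linear 0 (B i j)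
  · by_cases hij : i = j <;>
      simp [stabilityPencil, Bivariate.swap_C, Bivariate.swap_Y, hij]

end Stability

section InherentStability

variable {R S : Type*} [CommRing R] [CommRing S] {m : Type*} [Fintype m] {r k : ℕ}

/-- The inherent stability conditions for the rows of (0-based) index at least `k`; `k = 1` gives
inherent Runge–Kutta stability and `k = 2` inherent quadratic stability (IQS). The matrix
`T` is traditionally called `X`, a name kept here for the polynomial variable. -/
structure InherentStability (k : ℕ) (A : Matrix m m R) (U : Matrix m (Fin r) R)
    (B : Matrix (Fin r) m R) (V T : Matrix (Fin r) (Fin r) R) : Prop where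
  row_mul_stage : ∀ i : Fin r, k ≤ (i : ℕ) → (B * A).row i = (T * B).row i
  row_mul_input : ∀ i : Fin r, k ≤ (i : ℕ) → (B * U).row i = (T * V - V * T).row i

namespace InherentStability

variable {A : Matrix m m R} {U : Matrix m (Fin r) R} {B : Matrix (Fin r) m R}
  {V T : Matrix (Fin r) (Fin r) R}

theorem map (h : InherentStability k A U B V T) (f : R →+* S) :
    InherentStability k (A.map f) (U.map f) (B.map f) (V.map f) (T.map f) where
  row_mul_stage i hi := by
    ext j
    simpa [← Matrix.map_mul] using congrArg f (congrFun (h.row_mul_stage i hi) j)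
  row_mul_input i hi := by
    ext j
    simpa [← Matrix.map_mul] using congrArg f (congrFun (h.row_mul_input i hi) j)

variable [DecidableEq m]

theorem row_one_sub_smul_mul_stabilityMatrix (h : InherentStability k A U B V T) {ω : R}
    (hA : IsUnit (1 - ω • A).det) {i : Fin r} (hi : k ≤ (i : ℕ)) :
    ((1 - ω • T) * stabilityMatrix A U B V ω).row i = (V * (1 - ω • T)).row i := by
  have row_mul_B : ((1 - ω • T) * B).row i = (B * (1 - ω • A)).row i := by
    ext j
    simpa [Matrix.sub_mul, Matrix.mul_sub] using
      congrArg (ω * ·) (congrFun (h.row_mul_stage i hi) j).symm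
  have row_mul_BU : ((1 - ω • T) * B * ((1 - ω • A)⁻¹ * U)).row i = (T * V - V * T).row i := by
    rw [row_mul_congr row_mul_B, Matrix.mul_assoc, mul_nonsing_inv_cancel_left _ _ hA,
      h.row_mul_input i hi]
  calc ((1 - ω • T) * stabilityMatrix A U B V ω).row i
      = ((1 - ω • T) * V).row i + ω • ((1 - ω • T) * B * ((1 - ω • A)⁻¹ * U)).row i := by
        ext j
        simp [stabilityMatrix, Matrix.mul_add, Matrix.mul_assoc]
    _ = (V * (1 - ω • T)).row i := by
        rw [row_mul_BU]
        ext j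
        simp [Matrix.sub_mul, mul_sub]

theorem X_pow_dvd_charpoly_stabilityMatrix (h : InherentStability k A U B V T)
    (hV : ∀ i j : Fin r, k ≤ (i : ℕ) → (j : ℕ) ≤ i → V i j = 0) {ω : R}
    (hA : IsUnit (1 - ω • A).det) (hT : IsUnit (1 - ω • T).det) :
    X ^ (r - k) ∣ (stabilityMatrix A U B V ω).charpoly := by
  rw [← charpoly_units_conj (nonsingInvUnit _ hT)]
  refine X_pow_dvd_charpoly_of_strictUpper_rows fun i j hi hj ↦ ?_
  have row_conj : ((1 - ω • T) * stabilityMatrix A U B V ω * (1 - ω • T)⁻¹).row i = V.row i := by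
    rw [row_mul_congr (h.row_one_sub_smul_mul_stabilityMatrix hA hi),
      mul_nonsing_inv_cancel_right _ _ hT]
  exact (congrFun row_conj j).trans (hV i j hi hj)

theorem X_pow_dvd_stabilityPolynomial (h : InherentStability k A U B V T)
    (hV : ∀ i j : Fin r, k ≤ (i : ℕ) → (j : ℕ) ≤ i → V i j = 0) :
    X ^ (r - k) ∣ stabilityPolynomial A U B V := by
  let φ : R[X] →+* PowerSeries R := coeToPowerSeries.ringHom
  have φ_comp_C : φ.comp C = PowerSeries.C := by ext; simp [φ]
  have φ_X : φ X = PowerSeries.X := coe_X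
  have dvd_map : X ^ (r - k) ∣ (stabilityPolynomial A U B V).map φ := by
    rw [map_stabilityPolynomial, φ_comp_C, φ_X,
      det_stabilityPencil _ _ _ _ (isUnit_det_one_sub_X_smul A)]
    refine ((h.map PowerSeries.C).X_pow_dvd_charpoly_stabilityMatrix (fun i j hi hj ↦ ?_)
      (isUnit_det_one_sub_X_smul A) (isUnit_det_one_sub_X_smul T)).mul_left _
    simp [hV i j hi hj]
  refine X_pow_dvd_iff.2 fun d hd ↦ coe_injective R ?_
  simpa [φ, coeff_map] using X_pow_dvd_iff.1 dvd_map d hd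

theorem X_pow_dvd_charpoly_of_isUnit (h : InherentStability k A U B V T)
    (hV : ∀ i j : Fin r, k ≤ (i : ℕ) → (j : ℕ) ≤ i → V i j = 0) {ω : R}
    (hA : IsUnit (1 - ω • A).det) : X ^ (r - k) ∣ (stabilityMatrix A U B V ω).charpoly := by
  have dvd_map := Polynomial.map_dvd (evalRingHom ω) (h.X_pow_dvd_stabilityPolynomial hV)
  rw [map_evalRingHom_stabilityPolynomial A U B V hA, Polynomial.map_pow, map_X] at dvd_map
  exact (hA.map C).dvd_mul_left.1 dvd_map

end InherentStability

end InherentStability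

theorem stmt_1_general {R : Type*} [CommRing R] {m : Type*} [Fintype m] [DecidableEq m] {n : ℕ}
    (A : Matrix m m R) (U : Matrix m (Fin (n + 2)) R) (B : Matrix (Fin (n + 2)) m R)
    (V T : Matrix (Fin (n + 2)) (Fin (n + 2)) R) (hV1 : V 0 0 = 1)
    (hV0 : ∀ i j : Fin (n + 2), 1 ≤ (i : ℕ) → (j : ℕ) ≤ i → V i j = 0)
    (hIQS : InherentStability 2 A U B V T) :
    ∃ P₁ P₀ : R[X], P₁.degree ≤ Fintype.card m ∧ P₀.degree ≤ Fintype.card m ∧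
      P₁.eval 0 = 1 ∧ P₀.eval 0 = 0 ∧
      ∀ ω : R, IsUnit (1 - ω • A).det →
        C (1 - ω • A).det * (stabilityMatrix A U B V ω).charpoly =
          X ^ n *
            (C (1 - ω • A).det * X ^ 2 - C (P₁.eval ω) * X + C (P₀.eval ω)) := by
  have hV := charpoly_eq_of_strictUpper_rows_one hV1 hV0
  let Φ := stabilityPolynomial A U B V
  refine ⟨-Φ.coeff (n + 1), Φ.coeff n, ?_, ?_, ?_, ?_, fun ω hA ↦ ?_⟩
  · rw [degree_neg]
    exact degree_le_of_natDegree_le (natDegree_coeff_stabilityPolynomial_le A U B V _)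
  · exact degree_le_of_natDegree_le (natDegree_coeff_stabilityPolynomial_le A U B V _)
  · simp [Φ, eval_zero_coeff_stabilityPolynomial, hV, coeff_mul_X_pow']
  · rw [eval_zero_coeff_stabilityPolynomial, hV, coeff_mul_X_pow', if_neg (by omega)]
  · nontriviality R
    have charpoly_eq := eq_X_pow_mul_quadratic (charpoly_monic (stabilityMatrix A U B V ω))
      (n := n) (by simp) (hIQS.X_pow_dvd_charpoly_of_isUnit (fun i j hi ↦ hV0 i j (by omega)) hA)
    simp only [Φ, eval_neg, eval_coeff_stabilityPolynomial A U B V hA, C_neg, C_mul]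
    conv_lhs => rw [charpoly_eq]
    ring

end

/-- For r ≥ 2, λ ∈ ℂ, and r×r complex matrices A, U, B, V, X where A is
lower triangular with all diagonal entries λ, V has the V-structure, X has the
X-structure and the IQS conditions hold, there exist polynomials P₁, P₀ of degree ≤ r
with P₁(0) = 1, P₀(0) = 0 such that for every ω with 1 − λω ≠ 0,
(1−λω)^r · charpoly(M(ω)) = X^(r−2)·((1−λω)^r X² − P₁(ω) X + P₀(ω)). -/
theorem stmt_1 {r : ℕ} (hr : 2 ≤ r) (lam : ℂ)
    (A U B V X : Matrix (Fin r) (Fin r) ℂ)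
    -- A lower triangular with diagonal entries λ
    (hAlow : ∀ i j : Fin r, (i : ℕ) < (j : ℕ) → A i j = 0)
    (hAdiag : ∀ i : Fin r, A i i = lam)
    -- V-structure
    (hV1 : V ⟨0, by omega⟩ ⟨0, by omega⟩ = 1)
    (hV0 : ∀ i j : Fin r, 1 ≤ (i : ℕ) → (j : ℕ) ≤ (i : ℕ) → V i j = 0)
    -- X-structure
    (hXsub : ∀ i j : Fin r, 2 ≤ (i : ℕ) → (j : ℕ) = (i : ℕ) - 1 → X i j = 1)
    (hXzero : ∀ i j : Fin r, 2 ≤ (i : ℕ) → (j : ℕ) ≠ (i : ℕ) - 1 → (j : ℕ) ≠ r - 1 →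
      X i j = 0)
    -- IQS conditions (rows 3 through r, i.e. 0-based indices i with i ≥ 2)
    (hIQS1 : ∀ i j : Fin r, 2 ≤ (i : ℕ) → (B * A) i j = (X * B) i j)
    (hIQS2 : ∀ i j : Fin r, 2 ≤ (i : ℕ) → (B * U) i j = (X * V - V * X) i j) :
    ∃ P₁ P₀ : Polynomial ℂ, P₁.degree ≤ r ∧ P₀.degree ≤ r ∧
      P₁.eval 0 = 1 ∧ P₀.eval 0 = 0 ∧
      ∀ ω : ℂ, 1 - lam * ω ≠ 0 →
        Polynomial.C ((1 - lam * ω) ^ r) *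
            (V + ω • (B * (1 - ω • A)⁻¹ * U)).charpoly =
          Polynomial.X ^ (r - 2) *
            (Polynomial.C ((1 - lam * ω) ^ r) * Polynomial.X ^ 2 -
              Polynomial.C (P₁.eval ω) * Polynomial.X +
              Polynomial.C (P₀.eval ω)) := by
  obtain ⟨n, rfl⟩ := Nat.exists_eq_add_of_le' hr
  obtain ⟨P₁, P₀, hP₁, hP₀, hP₁_zero, hP₀_zero, hP⟩ :=
    stmt_1_general A U B V X hV1 hV0
      ⟨fun i hi ↦ funext (hIQS1 i · hi), fun i hi ↦ funext (hIQS2 i · hi)⟩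
  have det_eq (ω : ℂ) : (1 - ω • A).det = (1 - lam * ω) ^ (n + 2) := by
    simpa using det_one_sub_smul_of_isLowerTriangular ω (fun i j hij ↦ hAlow i j hij) hAdiag
  refine ⟨P₁, P₀, by simpa using hP₁, by simpa using hP₀, hP₁_zero, hP₀_zero, fun ω hω ↦ ?_⟩
  simpa only [det_eq, stabilityMatrix, Nat.add_sub_cancel] using
    hP ω (det_eq ω ▸ (pow_ne_zero _ hω).isUnit)
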